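/- Let m,n ≥ 2 and let k be an integer with ⌈m/min(m,n)⌉ ≤ k ≤ m. Then the extreme points of L_{m,n} lying in L_{m,n,k} are dense in L_{m,n,k}: for every quantum channel L with rank Z(L) ≤ k and every ε > 0 there exists an extreme point L' of L_{m,n} with rank Z(L') ≤ k and ‖Z(L') − Z(L)‖ < ε. -/

import Mathlib

open Matrix
open scoped ComplexOrder

/-- The Choi matrix of a linear map `L` from `m × m` to `n × n` complex matrices:
its `((i,p),(j,q))` entry is the `(p,q)` entry of `L(E_{ij})`. -/
def choi (m n : ℕ) (L : Matrix (Fin m) (Fin m) ℂ →ₗ[ℂ] Matrix (Fin n) (Fin n) ℂ) :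
    Matrix (Fin m × Fin n) (Fin m × Fin n) ℂ :=
  Matrix.of fun ip jq => L (Matrix.single ip.1 jq.1 (1 : ℂ)) ip.2 jq.2

/-- `L` is a quantum channel: it admits a Kraus representation
`L(X) = ∑ Aᵢ X Aᵢ*` with `∑ Aᵢ* Aᵢ = I`. -/
def IsChannel (m n : ℕ) (L : Matrix (Fin m) (Fin m) ℂ →ₗ[ℂ] Matrix (Fin n) (Fin n) ℂ) : Prop :=
  ∃ (k : ℕ) (A : Fin k → Matrix (Fin n) (Fin m) ℂ),
    (∀ X, L X = ∑ i, A i * X * (A i)ᴴ) ∧ ∑ i, (A i)ᴴ * A i = 1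

/-- `L` is an extreme point of the convex set of quantum channels. -/
def IsExtremeChannel (m n : ℕ)
    (L : Matrix (Fin m) (Fin m) ℂ →ₗ[ℂ] Matrix (Fin n) (Fin n) ℂ) : Prop :=
  IsChannel m n L ∧
    ∀ L₁ L₂ : Matrix (Fin m) (Fin m) ℂ →ₗ[ℂ] Matrix (Fin n) (Fin n) ℂ,
      IsChannel m n L₁ → IsChannel m n L₂ → ∀ t : ℝ, 0 < t → t < 1 →
      L = (t : ℂ) • L₁ + ((1 - t : ℝ) : ℂ) • L₂ → L₁ = L ∧ L₂ = L

attribute [local instance] Matrix.frobeniusNormedAddCommGroup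

open Filter Topology

/-- Inverse square roots of positive elements tending to `1` can be chosen to tend to `1`. -/
lemma CStarAlgebra.exists_tendsto_conj_eq_one {A : Type*} [CStarAlgebra A] [PartialOrder A]
    [StarOrderedRing A] {X : Type*} {l : Filter X} {S : X → A} (hS : Tendsto S l (𝓝 1))
    (hpos : ∀ᶠ x in l, 0 ≤ S x) :
    ∃ T : X → A, Tendsto T l (𝓝 1) ∧ ∀ᶠ x in l, star (T x) * S x * T x = 1 := by
  have hunit : ∀ᶠ x in l, IsUnit (S x) := hS (Units.nhds 1)
  have hsp : ∀ᶠ x in l, IsStrictlyPositive (S x) := by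
    filter_upwards [hpos, hunit] with x h1 h2
    exact h2.isStrictlyPositive h1
  refine ⟨fun x => S x ^ (-(1 / 2) : ℝ), ?_, ?_⟩
  · have hc := (CFC.continuousOn_rpow (A := A) (-(1 / 2) : ℝ)) 1 isStrictlyPositive_one
    have h := hc.tendsto.comp (tendsto_nhdsWithin_iff.2 ⟨hS, hsp⟩)
    simpa [Function.comp_def] using h
  · filter_upwards [hsp] with x hx
    rw [(IsSelfAdjoint.of_nonneg CFC.rpow_nonneg).star_eq]
    exact CFC.conjugate_rpow_neg_one_half (S x)

open scoped Matrix.Norms.L2Operator MatrixOrder in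
lemma Matrix.exists_tendsto_conj_eq_one {m : ℕ} {X : Type*} {l : Filter X}
    {S : X → Matrix (Fin m) (Fin m) ℂ} (hS : Tendsto S l (𝓝 1))
    (hpos : ∀ᶠ x in l, (S x).PosSemidef) :
    ∃ T : X → Matrix (Fin m) (Fin m) ℂ, Tendsto T l (𝓝 1) ∧
      ∀ᶠ x in l, (T x)ᴴ * S x * T x = 1 :=
  CStarAlgebra.exists_tendsto_conj_eq_one hS
    (hpos.mono fun _ hx => Matrix.nonneg_iff_posSemidef.2 hx)

open scoped MatrixOrder in
/-- If `C` is injective and `D Dᴴ` is dominated by a multiple of `C Cᴴ`, then `D` factors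
through `C`. -/
lemma Matrix.exists_eq_mul_of_mul_conjTranspose_eq {ι κ κ₁ κ₂ : Type*} [Fintype ι] [DecidableEq ι]
    [Fintype κ] [DecidableEq κ] [Fintype κ₁] [Fintype κ₂]
    {C : Matrix ι κ ℂ} (hC : Function.Injective C.mulVec) {D : Matrix ι κ₁ ℂ} {E : Matrix ι κ₂ ℂ}
    {t s : ℝ} (ht : 0 < t) (hs : 0 ≤ s)
    (h : C * Cᴴ = (t : ℂ) • (D * Dᴴ) + (s : ℂ) • (E * Eᴴ)) : ∃ G : Matrix κ κ₁ ℂ, D = C * G := by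
  have hu : IsUnit (Cᴴ * C).det :=
    (Matrix.isUnit_iff_isUnit_det _).1 (Matrix.PosDef.conjTranspose_mul_self C hC).isUnit
  set Q : Matrix ι ι ℂ := 1 - C * (Cᴴ * C)⁻¹ * Cᴴ with hQ
  have hCQ : Cᴴ * Q = 0 := by
    rw [hQ, Matrix.mul_sub, Matrix.mul_one, ← Matrix.mul_assoc, ← Matrix.mul_assoc,
      Matrix.mul_nonsing_inv _ hu, Matrix.one_mul, sub_self]
  have hsum : (t : ℂ) • ((Dᴴ * Q)ᴴ * (Dᴴ * Q)) + (s : ℂ) • ((Eᴴ * Q)ᴴ * (Eᴴ * Q)) = 0 := by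
    have := congrArg (fun M => Qᴴ * M * Q) h
    simp only [Matrix.mul_assoc, hCQ, Matrix.mul_zero, Matrix.mul_add, Matrix.add_mul,
      Matrix.mul_smul, Matrix.smul_mul] at this
    simpa [Matrix.mul_assoc] using this.symm
  have hD : 0 ≤ (t : ℂ) • ((Dᴴ * Q)ᴴ * (Dᴴ * Q)) := Matrix.nonneg_iff_posSemidef.2
    ((Matrix.posSemidef_conjTranspose_mul_self _).smul (by exact_mod_cast ht.le))
  have hE : 0 ≤ (s : ℂ) • ((Eᴴ * Q)ᴴ * (Eᴴ * Q)) := Matrix.nonneg_iff_posSemidef.2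
    ((Matrix.posSemidef_conjTranspose_mul_self _).smul (by exact_mod_cast hs))
  have h0 := ((add_eq_zero_iff_of_nonneg hD hE).1 hsum).1
  have hDQ : Dᴴ * Q = 0 := by
    rw [smul_eq_zero, Matrix.conjTranspose_mul_self_eq_zero] at h0
    exact h0.resolve_left (by exact_mod_cast ht.ne')
  refine ⟨(Cᴴ * C)⁻¹ * Cᴴ * D, ?_⟩
  have hQD : Qᴴ * D = 0 := by simpa using congrArg Matrix.conjTranspose hDQ
  have hQs : Qᴴ = Q := by
    simp [hQ, Matrix.conjTranspose_nonsing_inv, Matrix.mul_assoc]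
  rw [hQs, hQ, Matrix.sub_mul, Matrix.one_mul, sub_eq_zero] at hQD
  simpa only [Matrix.mul_assoc] using hQD

/-- A positive semidefinite matrix of rank at most `k` has a square factorization with `k`
columns. -/
lemma Matrix.PosSemidef.exists_eq_mul_conjTranspose {ι : Type*} [Fintype ι] [DecidableEq ι]
    {Z : Matrix ι ι ℂ} (hZ : Z.PosSemidef) {k : ℕ} (hk : Z.rank ≤ k) :
    ∃ C : Matrix ι (Fin k) ℂ, Z = C * Cᴴ := by
  have hH := hZ.isHermitian
  rw [hH.rank_eq_card_non_zero_eigs] at hk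
  obtain ⟨e⟩ := Function.Embedding.nonempty_of_card_le
    (α := {i // hH.eigenvalues i ≠ 0}) (β := Fin k) (by simpa using hk)
  let U : Matrix ι ι ℂ := hH.eigenvectorUnitary
  let F : Matrix ι (Fin k) ℂ := Matrix.of fun i a =>
    if h : ∃ x, e x = a then U i h.choose * (√(hH.eigenvalues h.choose) : ℂ) else 0
  have hF : ∀ i x, F i (e x) = U i x * (√(hH.eigenvalues x) : ℂ) := by
    intro i x
    have h : ∃ y, e y = e x := ⟨x, rfl⟩
    have hx : h.choose = x := e.injective h.choose_spec
    simp only [F, Matrix.of_apply, dif_pos h, hx]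
  have hF0 : ∀ i a, a ∉ Set.range e → F i a = 0 := by
    intro i a ha
    simp only [F, Matrix.of_apply]
    exact dif_neg ha
  refine ⟨F, ?_⟩
  ext i j
  have h1 : (F * Fᴴ) i j = ∑ x, F i (e x) * star (F j (e x)) := by
    rw [Matrix.mul_apply]
    symm
    exact Fintype.sum_of_injective e e.injective _ _
      (fun a ha => by simp [hF0 i a ha]) (fun x => by simp)
  have h2 : Z i j = ∑ x, U i x * (hH.eigenvalues x : ℂ) * star (U j x) := by
    conv_lhs => rw [hH.spectral_theorem, Unitary.conjStarAlgAut_apply, Matrix.mul_apply]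
    simp [Matrix.mul_diagonal, U]
  rw [h1, h2]
  symm
  refine Fintype.sum_of_injective (Subtype.val) Subtype.val_injective _ _ ?_ ?_
  · intro x hx
    have : hH.eigenvalues x = 0 := by
      by_contra h
      exact hx ⟨⟨x, h⟩, rfl⟩
    simp [this]
  · intro x
    rw [hF, hF]
    have h3 : ((√(hH.eigenvalues x) : ℝ) : ℂ) * (√(hH.eigenvalues x) : ℝ) = hH.eigenvalues x := by
      rw [← Complex.ofReal_mul, Real.mul_self_sqrt (hZ.eigenvalues_nonneg x)]
    rw [← h3]
    simp only [star_mul', Complex.star_def, Complex.conj_ofReal]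
    ring

/-- The completely positive map with Kraus operators `A`. -/
def krausMap {m n k : ℕ} (A : Fin k → Matrix (Fin n) (Fin m) ℂ) :
    Matrix (Fin m) (Fin m) ℂ →ₗ[ℂ] Matrix (Fin n) (Fin n) ℂ where
  toFun X := ∑ a, A a * X * (A a)ᴴ
  map_add' X Y := by simp [Matrix.mul_add, Matrix.add_mul, Finset.sum_add_distrib]
  map_smul' c X := by simp [Finset.smul_sum]

/-- The matrix whose columns are the vectorized Kraus operators `A`. -/
def krausStack {m n k : ℕ} (A : Fin k → Matrix (Fin n) (Fin m) ℂ) :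
    Matrix (Fin m × Fin n) (Fin k) ℂ :=
  Matrix.of fun ip a => A a ip.2 ip.1

lemma choi_krausMap {m n k : ℕ} (A : Fin k → Matrix (Fin n) (Fin m) ℂ) :
    choi m n (krausMap A) = krausStack A * (krausStack A)ᴴ := by
  ext ⟨i, p⟩ ⟨j, q⟩
  simp only [choi, krausMap, krausStack, LinearMap.coe_mk, AddHom.coe_mk, Matrix.of_apply,
    Matrix.sum_apply, Matrix.mul_apply, Matrix.conjTranspose_apply]
  refine Finset.sum_congr rfl fun a _ => ?_
  rw [Finset.sum_eq_single j, Finset.sum_eq_single i]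
  · simp
  · intro b _ hb
    simp [hb.symm]
  · simp
  · intro b _ hb
    simp [hb.symm]
  · simp

lemma choi_injective (m n : ℕ) : Function.Injective (choi m n) := by
  intro L₁ L₂ h
  refine Matrix.ext_linearMap ℂ fun i j => LinearMap.ext_ring ?_
  ext p q
  simpa [choi] using congrFun (congrFun h (i, p)) (j, q)

lemma isChannel_iff_exists_krausMap {m n : ℕ}
    {L : Matrix (Fin m) (Fin m) ℂ →ₗ[ℂ] Matrix (Fin n) (Fin n) ℂ} :
    IsChannel m n L ↔ ∃ (k : ℕ) (A : Fin k → Matrix (Fin n) (Fin m) ℂ),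
      L = krausMap A ∧ ∑ a, (A a)ᴴ * A a = 1 :=
  exists_congr fun _ => exists_congr fun _ =>
    and_congr_left fun _ => ⟨fun h => LinearMap.ext h, fun h X => by rw [h]; rfl⟩

lemma sum_conjTranspose_mul_self_apply {m n k : ℕ} (A : Fin k → Matrix (Fin n) (Fin m) ℂ)
    (i j : Fin m) : (∑ a, (A a)ᴴ * A a) i j = ∑ p, choi m n (krausMap A) (j, p) (i, p) := by
  simp only [choi_krausMap, krausStack, Matrix.sum_apply, Matrix.mul_apply,
    Matrix.conjTranspose_apply, Matrix.of_apply]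
  rw [Finset.sum_comm]
  simp only [mul_comm]

/-- A channel of Choi rank at most `k` has a Kraus representation with exactly `k` operators. -/
lemma IsChannel.exists_krausMap_of_rank_le {m n k : ℕ}
    {L : Matrix (Fin m) (Fin m) ℂ →ₗ[ℂ] Matrix (Fin n) (Fin n) ℂ} (hL : IsChannel m n L)
    (hrank : (choi m n L).rank ≤ k) :
    ∃ A : Fin k → Matrix (Fin n) (Fin m) ℂ, L = krausMap A ∧ ∑ a, (A a)ᴴ * A a = 1 := by
  obtain ⟨N, B, rfl, hB⟩ := isChannel_iff_exists_krausMap.1 hL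
  have hpsd : (choi m n (krausMap B)).PosSemidef := by
    rw [choi_krausMap]
    exact Matrix.posSemidef_self_mul_conjTranspose _
  obtain ⟨C, hC⟩ := hpsd.exists_eq_mul_conjTranspose hrank
  have hBA : krausMap B = krausMap fun a => Matrix.of fun p i => C (i, p) a := by
    apply choi_injective
    rw [hC, choi_krausMap]
    rfl
  refine ⟨_, hBA, ?_⟩
  ext i j
  rw [sum_conjTranspose_mul_self_apply, ← hBA, ← sum_conjTranspose_mul_self_apply, hB]

lemma rank_choi_krausMap_le {m n k : ℕ} (A : Fin k → Matrix (Fin n) (Fin m) ℂ) :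
    (choi m n (krausMap A)).rank ≤ k := by
  rw [choi_krausMap]
  exact (Matrix.rank_mul_le_left _ _).trans (by simpa using Matrix.rank_le_card_width (krausStack A))

lemma krausStack_mulVec_injective {m n k : ℕ} {A : Fin k → Matrix (Fin n) (Fin m) ℂ}
    (hA : LinearIndependent ℂ fun ab : Fin k × Fin k => (A ab.1)ᴴ * A ab.2) :
    Function.Injective (krausStack A).mulVec := by
  rw [← Matrix.coe_mulVecLin, ← LinearMap.ker_eq_bot, LinearMap.ker_eq_bot']
  intro x hx
  have hsum : ∑ b, x b • A b = 0 := by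
    ext p i
    have := congrFun hx (i, p)
    simpa [Matrix.mulVec, dotProduct, krausStack, Matrix.sum_apply, mul_comm] using this
  funext c
  have key := Fintype.linearIndependent_iff.1 hA (fun ab => if ab.1 = c then x ab.2 else 0) (by
    rw [Fintype.sum_prod_type, Finset.sum_eq_single c]
    · simp only [if_true, ← Matrix.mul_smul, ← Matrix.mul_sum, hsum, Matrix.mul_zero]
    · intro b _ hb
      simp [hb]
    · simp)
  simpa using key (c, c)

/-- A channel dominated by one with linearly independent products `(A a)ᴴ * A b` equals it. -/
lemma krausMap_eq_of_convex_combination {m n k : ℕ} {A : Fin k → Matrix (Fin n) (Fin m) ℂ}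
    (hA : LinearIndependent ℂ fun ab : Fin k × Fin k => (A ab.1)ᴴ * A ab.2)
    (hA1 : ∑ a, (A a)ᴴ * A a = 1)
    {L₁ L₂ : Matrix (Fin m) (Fin m) ℂ →ₗ[ℂ] Matrix (Fin n) (Fin n) ℂ}
    (h₁ : IsChannel m n L₁) (h₂ : IsChannel m n L₂) {t s : ℝ} (ht : 0 < t) (hs : 0 ≤ s)
    (h : krausMap A = (t : ℂ) • L₁ + (s : ℂ) • L₂) : L₁ = krausMap A := by
  obtain ⟨k₁, B, rfl, hB⟩ := isChannel_iff_exists_krausMap.1 h₁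
  obtain ⟨k₂, B₂, rfl, -⟩ := isChannel_iff_exists_krausMap.1 h₂
  have hchoi : krausStack A * (krausStack A)ᴴ = (t : ℂ) • (krausStack B * (krausStack B)ᴴ) +
      (s : ℂ) • (krausStack B₂ * (krausStack B₂)ᴴ) := by
    rw [← choi_krausMap, ← choi_krausMap, ← choi_krausMap, h]
    ext
    simp [choi]
  obtain ⟨G, hG⟩ := Matrix.exists_eq_mul_of_mul_conjTranspose_eq
    (krausStack_mulVec_injective hA) ht hs hchoi
  have hBG : ∀ c, B c = ∑ a, G a c • A a := by
    intro c
    ext p i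
    have := congrFun (congrFun hG (i, p)) c
    simpa [krausStack, Matrix.mul_apply, Matrix.sum_apply, mul_comm] using this
  have hH : ∑ a, ∑ b, (G * Gᴴ) b a • ((A a)ᴴ * A b) = ∑ a, (A a)ᴴ * A a := by
    have hc : ∀ c, (B c)ᴴ * B c = ∑ a, ∑ b, (G b c * star (G a c)) • ((A a)ᴴ * A b) := by
      intro c
      rw [hBG c, Matrix.conjTranspose_sum, Matrix.sum_mul]
      refine Finset.sum_congr rfl fun a _ => ?_
      rw [Matrix.mul_sum]
      refine Finset.sum_congr rfl fun b _ => ?_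
      rw [Matrix.conjTranspose_smul, Matrix.smul_mul, Matrix.mul_smul, smul_smul, mul_comm]
    rw [hA1, ← hB, eq_comm]
    simp only [hc]
    rw [Finset.sum_comm]
    refine Finset.sum_congr rfl fun a _ => ?_
    rw [Finset.sum_comm]
    refine Finset.sum_congr rfl fun b _ => ?_
    rw [Matrix.mul_apply, Finset.sum_smul]
    rfl
  have hGG : G * Gᴴ = 1 := by
    have key := Fintype.linearIndependent_iff.1 hA 
      (fun ab => (G * Gᴴ) ab.2 ab.1 - (1 : Matrix (Fin k) (Fin k) ℂ) ab.2 ab.1) (by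
      rw [Fintype.sum_prod_type]
      simp only [sub_smul, Finset.sum_sub_distrib, hH]
      simp [Matrix.one_apply, ite_smul])
    ext b a
    exact sub_eq_zero.1 (key (a, b))
  apply choi_injective
  rw [choi_krausMap, choi_krausMap, hG, Matrix.conjTranspose_mul, Matrix.mul_assoc,
    ← Matrix.mul_assoc G, hGG, Matrix.one_mul]

/-- Sufficiency of Choi's criterion for extremality. -/
lemma isExtremeChannel_krausMap {m n k : ℕ} {A : Fin k → Matrix (Fin n) (Fin m) ℂ}
    (hA : LinearIndependent ℂ fun ab : Fin k × Fin k => (A ab.1)ᴴ * A ab.2)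
    (hA1 : ∑ a, (A a)ᴴ * A a = 1) : IsExtremeChannel m n (krausMap A) := by
  refine ⟨isChannel_iff_exists_krausMap.2 ⟨k, A, rfl, hA1⟩, ?_⟩
  intro L₁ L₂ h₁ h₂ t ht0 ht1 h
  have h1t : 0 < 1 - t := sub_pos.2 ht1
  exact ⟨krausMap_eq_of_convex_combination hA hA1 h₁ h₂ ht0 h1t.le h,
    krausMap_eq_of_convex_combination hA hA1 h₂ h₁ h1t ht0.le (h.trans (add_comm _ _))⟩

lemma linearIndependent_conjTranspose_mul_mul_right {m n k : ℕ}
    {A : Fin k → Matrix (Fin n) (Fin m) ℂ}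
    (hA : LinearIndependent ℂ fun ab : Fin k × Fin k => (A ab.1)ᴴ * A ab.2)
    {T : Matrix (Fin m) (Fin m) ℂ} (hT : IsUnit T) :
    LinearIndependent ℂ fun ab : Fin k × Fin k => (A ab.1 * T)ᴴ * (A ab.2 * T) := by
  let f : Matrix (Fin m) (Fin m) ℂ →ₗ[ℂ] Matrix (Fin m) (Fin m) ℂ :=
    LinearMap.mulLeft ℂ Tᴴ ∘ₗ LinearMap.mulRight ℂ T
  have hf : LinearMap.ker f = ⊥ := by
    refine LinearMap.ker_eq_bot.2 fun X Y h => ?_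
    have hT' : IsUnit Tᴴ := hT.star
    exact hT.mul_right_cancel (hT'.mul_left_cancel h)
  have hfA : (fun ab : Fin k × Fin k => (A ab.1 * T)ᴴ * (A ab.2 * T)) =
      f ∘ fun ab => (A ab.1)ᴴ * A ab.2 := by
    funext ab
    simp [f, Matrix.mul_assoc]
  rw [hfA]
  exact hA.map' f hf

/-- A quadratic matrix polynomial with leading coefficient `1` is nonsingular off a finite set. -/
lemma Matrix.eventually_det_ne_zero {ι : Type*} [Fintype ι] [DecidableEq ι]
    (C D : Matrix ι ι ℂ) :
    ∀ᶠ t : ℝ in 𝓝[≠] 0, (D + (t : ℂ) • C + ((t : ℂ) ^ 2) • 1).det ≠ 0 := by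
  let N : Matrix ι ι (Polynomial ℂ) :=
    1 + (Polynomial.X : Polynomial ℂ) • C.map Polynomial.C +
      (Polynomial.X ^ 2 : Polynomial ℂ) • D.map Polynomial.C
  have hN : ∀ z : ℂ, N.det.eval z = (1 + z • C + z ^ 2 • D).det := by
    intro z
    rw [← Polynomial.coe_evalRingHom, RingHom.map_det]
    congr 1
    ext i j
    by_cases h : i = j <;> (simp [N, h]; ring)
  have hN0 : N.det ≠ 0 := by
    intro h
    have := hN 0
    simp [h] at this
  have hfin : {t : ℝ | N.det.IsRoot ((t : ℂ)⁻¹)}.Finite := by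
    refine (Polynomial.finite_setOfPred_isRoot hN0).preimage (f := fun t : ℝ => (t : ℂ)⁻¹) ?_
    exact (inv_injective.comp Complex.ofReal_injective).injOn
  have hev : ∀ᶠ t : ℝ in 𝓝[≠] 0, t ∉ {t : ℝ | N.det.IsRoot ((t : ℂ)⁻¹)} := by
    refine (Filter.le_cofinite_iff_eventually_ne.2 ?_) hfin.compl_mem_cofinite
    intro x
    by_cases hx : x = 0
    · subst hx
      exact self_mem_nhdsWithin
    · exact eventually_nhdsWithin_of_eventually_nhds (isOpen_ne.mem_nhds (Ne.symm hx))
  filter_upwards [hev, self_mem_nhdsWithin] with t ht ht0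
  have ht0' : (t : ℂ) ≠ 0 := by exact_mod_cast ht0
  have heq : D + (t : ℂ) • C + ((t : ℂ) ^ 2) • 1 =
      ((t : ℂ) ^ 2) • (1 + (t : ℂ)⁻¹ • C + (t : ℂ)⁻¹ ^ 2 • D) := by
    rw [smul_add, smul_add, smul_smul, smul_smul]
    have h1 : (t : ℂ) ^ 2 * (t : ℂ)⁻¹ = t := by field_simp
    have h2 : (t : ℂ) ^ 2 * (t : ℂ)⁻¹ ^ 2 = 1 := by field_simp
    rw [h1, h2, one_smul]
    abel
  rw [heq, Matrix.det_smul, ← hN]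
  exact mul_ne_zero (pow_ne_zero _ (pow_ne_zero _ ht0')) ht

/-- Generic perturbation of Kraus operators makes the products `(A a)ᴴ * A b` independent. -/
lemma eventually_linearIndependent_perturb {m n k : ℕ} (hkm : k ≤ m) (p : Fin n)
    (A : Fin k → Matrix (Fin n) (Fin m) ℂ) :
    ∀ᶠ t : ℝ in 𝓝[≠] 0, LinearIndependent ℂ fun ab : Fin k × Fin k =>
      (A ab.1 + (t : ℂ) • Matrix.single p (Fin.castLE hkm ab.1) 1)ᴴ *
        (A ab.2 + (t : ℂ) • Matrix.single p (Fin.castLE hkm ab.2) 1) := by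
  let E : Fin k → Matrix (Fin n) (Fin m) ℂ := fun a => Matrix.single p (Fin.castLE hkm a) 1
  let r : Matrix (Fin m) (Fin m) ℂ →ₗ[ℂ] (Fin k × Fin k → ℂ) :=
    { toFun := fun X cd => X (Fin.castLE hkm cd.1) (Fin.castLE hkm cd.2)
      map_add' := fun _ _ => rfl
      map_smul' := fun _ _ => rfl }
  let D : Matrix (Fin k × Fin k) (Fin k × Fin k) ℂ :=
    Matrix.of fun ab => r ((A ab.1)ᴴ * A ab.2)
  let C : Matrix (Fin k × Fin k) (Fin k × Fin k) ℂ :=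
    Matrix.of fun ab => r ((A ab.1)ᴴ * E ab.2 + (E ab.1)ᴴ * A ab.2)
  filter_upwards [Matrix.eventually_det_ne_zero C D] with t ht
  refine LinearIndependent.of_comp r ?_
  suffices h : (r ∘ fun ab : Fin k × Fin k =>
      (A ab.1 + (t : ℂ) • E ab.1)ᴴ * (A ab.2 + (t : ℂ) • E ab.2)) =
      (D + (t : ℂ) • C + ((t : ℂ) ^ 2) • 1).row by
    exact h ▸ Matrix.linearIndependent_rows_of_det_ne_zero ht
  funext ab
  have hE : r ((E ab.1)ᴴ * E ab.2) = (1 : Matrix (Fin k × Fin k) (Fin k × Fin k) ℂ) ab := by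
    funext cd
    change ((E ab.1)ᴴ * E ab.2) (Fin.castLE hkm cd.1) (Fin.castLE hkm cd.2) = _
    simp only [E, Matrix.conjTranspose_single, Matrix.single_mul_single_same, Matrix.single_apply,
      Matrix.one_apply, Prod.ext_iff, Fin.castLE_inj, star_one, mul_one]
  have hexp : (A ab.1 + (t : ℂ) • E ab.1)ᴴ * (A ab.2 + (t : ℂ) • E ab.2) =
      (A ab.1)ᴴ * A ab.2 + (t : ℂ) • ((A ab.1)ᴴ * E ab.2 + (E ab.1)ᴴ * A ab.2) +
        ((t : ℂ) ^ 2) • ((E ab.1)ᴴ * E ab.2) := by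
    simp only [Matrix.conjTranspose_add, Matrix.conjTranspose_smul, Complex.star_def,
      Complex.conj_ofReal, Matrix.add_mul, Matrix.mul_add, Matrix.smul_mul, Matrix.mul_smul,
      smul_add, smul_smul, pow_two]
    abel
  change r ((A ab.1 + (t : ℂ) • E ab.1)ᴴ * (A ab.2 + (t : ℂ) • E ab.2)) = _
  rw [hexp, map_add, map_add, map_smul, map_smul, hE]
  rfl

lemma continuous_choi_krausMap {m n k : ℕ} :
    Continuous fun A : Fin k → Matrix (Fin n) (Fin m) ℂ => choi m n (krausMap A) := by
  simp only [choi_krausMap]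
  have hs : Continuous (krausStack : (Fin k → Matrix (Fin n) (Fin m) ℂ) → _) :=
    continuous_matrix fun ip a => (continuous_apply a).matrix_elem ip.2 ip.1
  exact hs.matrix_mul hs.matrix_conjTranspose

/-- for `⌈m / min(m,n)⌉ ≤ k ≤ m` (encoded as `m ≤ k·min(m,n)` and `k ≤ m`), the
extreme points of `L_{m,n}` lying in `L_{m,n,k}` are dense in `L_{m,n,k}`. -/
theorem stmt10 (m n k : ℕ) (hm : 2 ≤ m) (hn : 2 ≤ n)
    (hk1 : m ≤ k * min m n) (hk2 : k ≤ m)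
    (L : Matrix (Fin m) (Fin m) ℂ →ₗ[ℂ] Matrix (Fin n) (Fin n) ℂ)
    (hL : IsChannel m n L) (hrank : (choi m n L).rank ≤ k) :
    ∀ ε : ℝ, 0 < ε →
      ∃ L' : Matrix (Fin m) (Fin m) ℂ →ₗ[ℂ] Matrix (Fin n) (Fin n) ℂ,
        IsExtremeChannel m n L' ∧ (choi m n L').rank ≤ k ∧
        ‖choi m n L' - choi m n L‖ < ε := by
  intro ε hε
  obtain ⟨A, rfl, hA1⟩ := hL.exists_krausMap_of_rank_le hrank
  let p : Fin n := ⟨0, by omega⟩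
  let B : ℝ → Fin k → Matrix (Fin n) (Fin m) ℂ := fun t a =>
    A a + (t : ℂ) • Matrix.single p (Fin.castLE hk2 a) 1
  have hB : ∀ a, Tendsto (fun t => B t a) (𝓝[≠] 0) (𝓝 (A a)) := by
    intro a
    have hc : Continuous fun t => B t a := by fun_prop
    have := hc.tendsto 0
    simp only [B, Complex.ofReal_zero, zero_smul, add_zero] at this
    exact this.mono_left nhdsWithin_le_nhds
  obtain ⟨T, hT1, hT⟩ := Matrix.exists_tendsto_conj_eq_one
    (S := fun t => ∑ a, (B t a)ᴴ * B t a) (l := 𝓝[≠] (0 : ℝ))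
    (by
      rw [← hA1]
      refine tendsto_finsetSum _ fun a _ => ?_
      exact ((continuous_id.matrix_conjTranspose.matrix_mul continuous_id).tendsto (A a)).comp
        (hB a))
    (Eventually.of_forall fun t =>
      Matrix.posSemidef_sum _ fun a _ => Matrix.posSemidef_conjTranspose_mul_self _)
  have hBT : ∀ a, Tendsto (fun t => B t a * T t) (𝓝[≠] 0) (𝓝 (A a)) := by
    intro a
    have hc : Continuous fun X : Matrix (Fin n) (Fin m) ℂ × Matrix (Fin m) (Fin m) ℂ =>
      X.1 * X.2 := continuous_fst.matrix_mul continuous_snd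
    have := (hc.tendsto (A a, 1)).comp ((hB a).prodMk_nhds hT1)
    simpa [Function.comp_def] using this
  have hchoi : Tendsto (fun t => choi m n (krausMap fun a => B t a * T t)) (𝓝[≠] 0)
      (𝓝 (choi m n (krausMap A))) :=
    (continuous_choi_krausMap.tendsto A).comp (tendsto_pi_nhds.2 hBT)
  have hnorm := (tendsto_iff_norm_sub_tendsto_zero.1 hchoi).eventually_lt_const hε
  obtain ⟨t, h1, h2, h3⟩ :=
    (hnorm.and (hT.and (eventually_linearIndependent_perturb hk2 p A))).exists
  have hunit : IsUnit (T t) := IsUnit.of_mul_eq_one_right _ h2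
  have hlin := linearIndependent_conjTranspose_mul_mul_right (A := B t) h3 hunit
  refine ⟨krausMap fun a => B t a * T t, isExtremeChannel_krausMap hlin ?_,
    rank_choi_krausMap_le _, h1⟩
  rw [← h2, Matrix.mul_sum, Matrix.sum_mul]
  refine Finset.sum_congr rfl fun a _ => ?_
  rw [Matrix.conjTranspose_mul, Matrix.mul_assoc, Matrix.mul_assoc, Matrix.mul_assoc]
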